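/- arXiv:2306.00109 — 3 statements merged into one kernel-verified Lean document; each statement's English description precedes it below -/
import Mathlib

section
/- Let D be a gluing of B and C over F. Then for every b ∈ B∖F and c ∈ C∖F: c·b = b·c, c·b θ_F b, and c·b ≤ b' for every b' ∈ D with b' θ_F b; that is, c·b = b·c is the minimum of the class [b]_F (so this minimum exists and does not depend on the choice of c). -/
/-- An integral residuated lattice: a lattice, a monoid, residuation for the two
divisions `ld x z` (i.e. `x \ z`) and `rd z y` (i.e. `z / y`), with `1` the top. -/
class IRL (α : Type*) extends Lattice α, Monoid α where
  ld : α → α → α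
  rd : α → α → α
  mul_le_iff_ld : ∀ x y z : α, x * y ≤ z ↔ y ≤ ld x z
  mul_le_iff_rd : ∀ x y z : α, x * y ≤ z ↔ x ≤ rd z y
  le_one : ∀ x : α, x ≤ 1

namespace IRL

variable {α : Type*} [IRL α]

/-- `theta F x y` iff `x\y ∈ F` and `y\x ∈ F`. -/
def theta (F : Set α) (x y : α) : Prop := ld x y ∈ F ∧ ld y x ∈ F

/-- The equivalence class `[x]_F`. -/
def cls (F : Set α) (x : α) : Set α := {y | theta F x y}

/-- A congruence filter of an IRL. -/
structure IsCongFilter (F : Set α) : Prop where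
  nonempty : F.Nonempty
  upward : ∀ x ∈ F, ∀ y : α, x ≤ y → y ∈ F
  mul_mem : ∀ x ∈ F, ∀ y ∈ F, x * y ∈ F
  conjL : ∀ x ∈ F, ∀ y : α, ld y (x * y) ∈ F
  conjR : ∀ x ∈ F, ∀ y : α, rd (y * x) y ∈ F

end IRL

/-- A gluing of `B` and `C` over the congruence filter `F = B ∩ C`. -/
structure GluingOverF {D : Type*} [IRL D] (B C F : Set D) : Prop where
  union_eq : B ∪ C = Set.univ
  inter_eq : B ∩ C = F
  filt : IRL.IsCongFilter F
  one_mem : (1 : D) ∈ F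
  lt_BC : ∀ b ∈ B \ F, ∀ c ∈ C \ F, b < c
  lt_CF : ∀ c ∈ C \ F, ∀ f ∈ F, f ≠ 1 → c < f
  C_sup : ∀ x ∈ C, ∀ y ∈ C, x ⊔ y ∈ C
  C_inf : ∀ x ∈ C, ∀ y ∈ C, x ⊓ y ∈ C
  C_mul : ∀ x ∈ C, ∀ y ∈ C, x * y ∈ C
  C_ld : ∀ x ∈ C, ∀ y ∈ C, IRL.ld x y ∈ C
  C_rd : ∀ x ∈ C, ∀ y ∈ C, IRL.rd x y ∈ C
  B_inf : ∀ x ∈ B, ∀ y ∈ B, x ⊓ y ∈ B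
  B_mul : ∀ x ∈ B, ∀ y ∈ B, x * y ∈ B
  B_ld : ∀ x ∈ B, ∀ y ∈ B, IRL.ld x y ∈ B
  B_rd : ∀ x ∈ B, ∀ y ∈ B, IRL.rd x y ∈ B

/-!
Since `B ∖ F` is a lower set, it contains `c·b` and `b·c`, so `(c·b)/b` and `b\(b·c)` lie in `B`.
Both are above `c`, which is not in the lower set `B ∖ F`, so they lie in `F`; hence `c·b` and `b·c`
belong to `[b]_F`. On the other hand `c` is below every element of `F`, so by residuation `c·b` and
`b·c` are below every element of `[b]_F`, in particular below each other.
-/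

theorem mem_of_le_of_isLowerSet_diff {α : Type*} [LE α] {s t : Set α} {x y : α}
    (hst : IsLowerSet (s \ t)) (hx : x ∉ s \ t) (hy : y ∈ s) (hxy : x ≤ y) : y ∈ t :=
  of_not_not fun hyt => hx (hst hxy ⟨hy, hyt⟩)

namespace IRL

section Residuation

variable {α : Type*} [IRL α]

theorem gc_mul_ld (x : α) : GaloisConnection (x * ·) (ld x) :=
  fun y z => mul_le_iff_ld x y z

theorem gc_mul_rd (y : α) : GaloisConnection (· * y) (rd · y) :=
  fun x z => mul_le_iff_rd x y z

instance : MulLeftMono α :=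
  ⟨fun x _ _ h => (gc_mul_ld x).monotone_l h⟩

instance : MulRightMono α :=
  ⟨fun y _ _ h => (gc_mul_rd y).monotone_l h⟩

theorem mul_le_left (x y : α) : x * y ≤ x :=
  mul_le_of_le_one_right' (le_one y)

theorem mul_le_right (x y : α) : x * y ≤ y :=
  mul_le_of_le_one_left' (le_one x)

end Residuation

namespace IsCongFilter

variable {α : Type*} [IRL α] {F : Set α}

theorem one_mem (hF : IsCongFilter F) : 1 ∈ F :=
  let ⟨x, hx⟩ := hF.nonempty
  hF.upward x hx 1 (le_one x)

theorem ld_mem_of_le (hF : IsCongFilter F) {x y : α} (hxy : x ≤ y) : ld x y ∈ F :=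
  hF.upward 1 hF.one_mem _ ((mul_le_iff_ld x 1 y).1 (by rwa [mul_one]))

theorem ld_mem_iff_rd_mem (hF : IsCongFilter F) {x y : α} : ld x y ∈ F ↔ rd y x ∈ F where
  mp h :=
    hF.upward _ (hF.conjR _ h x) _ ((gc_mul_rd x).monotone_u ((gc_mul_ld x).l_u_le y))
  mpr h :=
    hF.upward _ (hF.conjL _ h x) _ ((gc_mul_ld x).monotone_u ((gc_mul_rd x).l_u_le y))

theorem theta_iff_of_le (hF : IsCongFilter F) {x y : α} (hxy : x ≤ y) :
    theta F x y ↔ ld y x ∈ F :=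
  and_iff_right (hF.ld_mem_of_le hxy)

variable {B : Set α} {b c : α}

theorem theta_mul_left (hF : IsCongFilter F) (hBF : IsLowerSet (B \ F))
    (hrd : ∀ x ∈ B, ∀ y ∈ B, rd x y ∈ B) (hb : b ∈ B \ F) (hc : c ∉ B \ F) :
    theta F (c * b) b := by
  have hcb : c * b ∈ B \ F := hBF (mul_le_right c b) hb
  have hmem : rd (c * b) b ∈ F :=
    mem_of_le_of_isLowerSet_diff hBF hc (hrd _ hcb.1 _ hb.1) ((gc_mul_rd b).le_u_l c)
  exact (hF.theta_iff_of_le (mul_le_right c b)).2 (hF.ld_mem_iff_rd_mem.2 hmem)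

theorem theta_mul_right (hF : IsCongFilter F) (hBF : IsLowerSet (B \ F))
    (hld : ∀ x ∈ B, ∀ y ∈ B, ld x y ∈ B) (hb : b ∈ B \ F) (hc : c ∉ B \ F) :
    theta F (b * c) b := by
  have hbc : b * c ∈ B \ F := hBF (mul_le_left b c) hb
  have hmem : ld b (b * c) ∈ F :=
    mem_of_le_of_isLowerSet_diff hBF hc (hld _ hb.1 _ hbc.1) ((gc_mul_ld b).le_u_l c)
  exact (hF.theta_iff_of_le (mul_le_left b c)).2 hmem

theorem mul_left_le_of_theta (hF : IsCongFilter F) (hc : c ∈ lowerBounds F) {x : α}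
    (hx : theta F x b) : c * b ≤ x :=
  (mul_le_iff_rd c b x).2 (hc (hF.ld_mem_iff_rd_mem.1 hx.2))

end IsCongFilter

theorem mul_right_le_of_theta {α : Type*} [IRL α] {F : Set α} {b c x : α}
    (hc : c ∈ lowerBounds F) (hx : theta F x b) : b * c ≤ x :=
  (mul_le_iff_ld b c x).2 (hc hx.2)

end IRL

namespace GluingOverF

variable {D : Type*} [IRL D] {B C F : Set D}

theorem isLowerSet_diff (hg : GluingOverF B C F) : IsLowerSet (B \ F) := by
  intro b x hxb hb
  have hxF : x ∉ F := fun hx => hb.2 (hg.filt.upward x hx b hxb)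
  have hxBC : x ∈ B ∪ C := hg.union_eq ▸ Set.mem_univ x
  exact ⟨hxBC.resolve_right fun hxC => (hg.lt_BC b hb x ⟨hxC, hxF⟩).not_ge hxb, hxF⟩

theorem notMem_diff (hg : GluingOverF B C F) {c : D} (hc : c ∈ C) : c ∉ B \ F :=
  fun hcB => hcB.2 (hg.inter_eq ▸ ⟨hcB.1, hc⟩)

theorem mem_lowerBounds (hg : GluingOverF B C F) {c : D} (hc : c ∈ C \ F) :
    c ∈ lowerBounds F := by
  intro f hf
  obtain rfl | hf1 := eq_or_ne f 1
  · exact IRL.le_one c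
  · exact (hg.lt_CF c hc f hf hf1).le

end GluingOverF

theorem gluing_min_of_class_general {D : Type*} [IRL D] {B F : Set D} {b c : D}
    (hF : IRL.IsCongFilter F) (hBF : IsLowerSet (B \ F))
    (hld : ∀ x ∈ B, ∀ y ∈ B, IRL.ld x y ∈ B) (hrd : ∀ x ∈ B, ∀ y ∈ B, IRL.rd x y ∈ B)
    (hb : b ∈ B \ F) (hcB : c ∉ B \ F) (hcF : c ∈ lowerBounds F) :
    c * b = b * c ∧ IRL.theta F (c * b) b ∧
      ∀ b' : D, IRL.theta F b' b → c * b ≤ b' := by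
  have hcb : IRL.theta F (c * b) b := hF.theta_mul_left hBF hrd hb hcB
  have hbc : IRL.theta F (b * c) b := hF.theta_mul_right hBF hld hb hcB
  have hcomm : c * b = b * c :=
    le_antisymm (hF.mul_left_le_of_theta hcF hbc) (IRL.mul_right_le_of_theta hcF hcb)
  exact ⟨hcomm, hcb, fun _ => hF.mul_left_le_of_theta hcF⟩

/-- in a gluing of `B` and `C` over `F`, for `b ∈ B∖F` and `c ∈ C∖F`,
`c·b = b·c`, `c·b θ_F b`, and `c·b ≤ b'` for every `b'` with `b' θ_F b`; i.e.
`c·b = b·c` is the minimum of the class `[b]_F`. -/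
theorem gluing_min_of_class {D : Type*} [IRL D] {B C F : Set D}
    (hg : GluingOverF B C F) :
    ∀ b ∈ B \ F, ∀ c ∈ C \ F,
      c * b = b * c ∧ IRL.theta F (c * b) b ∧
      ∀ b' : D, IRL.theta F b' b → c * b ≤ b' :=
  fun _ hb _ hc => gluing_min_of_class_general hg.filt hg.isLowerSet_diff hg.B_ld hg.B_rd hb
    (hg.notMem_diff hc.1) (hg.mem_lowerBounds hc)
end

section
/- Let B be an integral residuated lattice and F a compatible congruence filter of B, and for x ∈ B∖F let σ(x) denote the minimum of [x]_F. Then for all x, y ∈ B∖F: x·y ∈ B∖F and σ(x·y) = x·σ(y) = σ(x)·y (σ is a strong conucleus on B∖F). -/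
/-!
The relation `theta F` is a congruence for multiplication, so `x * σ y` and `σ x * y` lie in the
class of `x * y`. Absorption says that each of these products is the minimum of some class, and
since classes are disjoint, that class must be the one of `x * y`.
-/

namespace IRL

variable {α : Type*} [IRL α]

instance inst_s3 : MulLeftMono α where
  elim x _ b hab := (mul_le_iff_ld x _ _).2 (hab.trans ((mul_le_iff_ld x b _).1 le_rfl))

instance inst_s3_2 : MulRightMono α where
  elim x _ b hab := (mul_le_iff_rd _ x _).2 (hab.trans ((mul_le_iff_rd b x _).1 le_rfl))

lemma mul_ld_le (a b : α) : a * ld a b ≤ b :=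
  (mul_le_iff_ld a _ b).2 le_rfl

lemma ld_mul_ld_le (a b c : α) : ld a b * ld b c ≤ ld a c := by
  rw [← mul_le_iff_ld]
  calc a * (ld a b * ld b c) = a * ld a b * ld b c := (mul_assoc _ _ _).symm
    _ ≤ b * ld b c := by gcongr; exact mul_ld_le a b
    _ ≤ c := mul_ld_le b c

lemma ld_le_ld_mul_left (x a b : α) : ld a b ≤ ld (x * a) (x * b) := by
  rw [← mul_le_iff_ld]
  calc x * a * ld a b = x * (a * ld a b) := mul_assoc _ _ _
    _ ≤ x * b := by gcongr; exact mul_ld_le a b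

lemma ld_conj_le_ld_mul_right (x a b : α) : ld x (ld a b * x) ≤ ld (a * x) (b * x) := by
  rw [← mul_le_iff_ld]
  calc a * x * ld x (ld a b * x) = a * (x * ld x (ld a b * x)) := mul_assoc _ _ _
    _ ≤ a * (ld a b * x) := by gcongr a * ?_; exact mul_ld_le x _
    _ = a * ld a b * x := (mul_assoc _ _ _).symm
    _ ≤ b * x := by gcongr; exact mul_ld_le a b

variable {F : Set α} {a b c : α}

lemma theta.symm (h : theta F a b) : theta F b a :=
  And.symm h

namespace IsCongFilter

lemma theta_trans (hF : IsCongFilter F) (hab : theta F a b) (hbc : theta F b c) : theta F a c :=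
  ⟨hF.upward _ (hF.mul_mem _ hab.1 _ hbc.1) _ (ld_mul_ld_le a b c),
    hF.upward _ (hF.mul_mem _ hbc.2 _ hab.2) _ (ld_mul_ld_le c b a)⟩

lemma theta_mul_left_s3 (hF : IsCongFilter F) (x : α) (h : theta F a b) :
    theta F (x * a) (x * b) :=
  ⟨hF.upward _ h.1 _ (ld_le_ld_mul_left x a b), hF.upward _ h.2 _ (ld_le_ld_mul_left x b a)⟩

lemma theta_mul_right_s3 (hF : IsCongFilter F) (x : α) (h : theta F a b) :
    theta F (a * x) (b * x) :=
  ⟨hF.upward _ (hF.conjL _ h.1 x) _ (ld_conj_le_ld_mul_right x a b),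
    hF.upward _ (hF.conjL _ h.2 x) _ (ld_conj_le_ld_mul_right x b a)⟩

lemma mul_notMem (hF : IsCongFilter F) (ha : a ∉ F) (b : α) : a * b ∉ F :=
  fun hab ↦ ha (hF.upward _ hab _ (mul_le_of_le_one_right' (le_one b)))

lemma cls_eq_of_theta (hF : IsCongFilter F) (h : theta F a b) : cls F a = cls F b :=
  Set.ext fun _ ↦ ⟨hF.theta_trans h.symm, hF.theta_trans h⟩

lemma isLeast_cls_of_theta (hF : IsCongFilter F) {m : α} (hm : IsLeast (cls F b) m)
    (h : theta F a m) : IsLeast (cls F a) m := by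
  have hbm : theta F b m := hm.1
  rwa [hF.cls_eq_of_theta (hF.theta_trans h hbm.symm)]

end IsCongFilter

end IRL

theorem sigma_strong_conucleus_general {B : Type*} [IRL B] {F : Set B}
    (hF : IRL.IsCongFilter F) {σ : B → B}
    (hσ : ∀ x : B, x ∉ F → IsLeast (IRL.cls F x) (σ x))
    (habs : ∀ b : B, b ∉ F → ∀ x : B, x ∉ F →
      (∃ u : B, u ∉ F ∧ b * σ x = σ u) ∧ (∃ v : B, v ∉ F ∧ σ x * b = σ v))
    (x : B) (hx : x ∉ F) (y : B) (hy : y ∉ F) :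
    x * y ∉ F ∧ σ (x * y) = x * σ y ∧ σ (x * y) = σ x * y := by
  have hxy : x * y ∉ F := hF.mul_notMem hx y
  obtain ⟨u, hu, hxu⟩ := (habs x hx y hy).1
  obtain ⟨v, hv, hvy⟩ := (habs y hy x hx).2
  have left_least : IsLeast (IRL.cls F (x * y)) (x * σ y) :=
    hF.isLeast_cls_of_theta (hxu ▸ hσ u hu) (hF.theta_mul_left_s3 x (hσ y hy).1)
  have right_least : IsLeast (IRL.cls F (x * y)) (σ x * y) :=
    hF.isLeast_cls_of_theta (hvy ▸ hσ v hv) (hF.theta_mul_right_s3 y (hσ x hx).1)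
  exact ⟨hxy, (hσ _ hxy).unique left_least, (hσ _ hxy).unique right_least⟩

/-- if `F` is a compatible congruence filter of an IRL `B` and `σ x`
is the minimum of `[x]_F` (for `x ∉ F`), then for all `x, y ∉ F`: `x·y ∉ F` and
`σ(x·y) = x·σ(y) = σ(x)·y` (σ is a strong conucleus on `B ∖ F`). -/
theorem sigma_strong_conucleus {B : Type*} [IRL B] (F : Set B)
    (hF : IRL.IsCongFilter F)
    (σ γ : B → B)
    (hstrict : ∀ f ∈ F, ∀ b : B, b ∉ F → b < f)
    (hσ : ∀ x : B, x ∉ F → IsLeast (IRL.cls F x) (σ x))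
    (hγ : ∀ x : B, x ∉ F → IsGreatest (IRL.cls F x) (γ x))
    (habs : ∀ b : B, b ∉ F → ∀ x : B, x ∉ F →
      (∃ u : B, u ∉ F ∧ b * σ x = σ u) ∧ (∃ v : B, v ∉ F ∧ σ x * b = σ v)) :
    ∀ x : B, x ∉ F → ∀ y : B, y ∉ F →
      x * y ∉ F ∧ σ (x * y) = x * σ y ∧ σ (x * y) = σ x * y :=
  sigma_strong_conucleus_general hF hσ habs
end

section
/- Let A be a GL₂-chain and a, b ∈ A with a < b < 1 and a·a ≠ b·b. Then b → a is the greatest element of the set A(a) := {x ∈ A | x·x = a·a}: that is, (b → a)·(b → a) = a·a, and x ≤ b → a for every x ∈ A with x·x = a·a. -/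
/-- A `GL₂`-chain: a bounded commutative integral residuated chain that is 2-potent
(`x·x·x = x·x`) and satisfies `x = 1 ∨ x·(x ∧ y) ≤ (x ∧ y)²`. -/
class GL2Chain (α : Type*) extends LinearOrder α, CommMonoid α where
  bot : α
  bot_le : ∀ x : α, bot ≤ x
  le_one : ∀ x : α, x ≤ 1
  himp : α → α → α
  mul_le_iff : ∀ x y z : α, x * y ≤ z ↔ y ≤ himp x z
  pot2 : ∀ x : α, x * x * x = x * x
  gl2 : ∀ x y : α, x = 1 ∨ x * min x y ≤ min x y * min x y

/-!
Since squares are idempotent, an element lies above `b * b` only if its square does too. So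
`a * a < b * b` forces `a < b * b`, and hence the residual `c` of `a` by `b` lies strictly below
`b`: otherwise `b * b ≤ b * c ≤ a`. Now `c * c ≤ b * c ≤ a` gives `c * c ≤ a * a`. Conversely,
if `x * x = a * a` then `x < b`, and the `GL₂` inequality `b * x ≤ x * x = a * a ≤ a` puts `x`
below `c`.
-/

section OrderedMul

variable {α : Type*} [Mul α]

theorem le_mul_of_isIdempotentElem_of_le [Preorder α] [MulLeftMono α] [MulRightMono α]
    {e x y : α} (he : IsIdempotentElem e) (hx : e ≤ x) (hy : e ≤ y) : e ≤ x * y :=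
  he.eq.ge.trans (mul_le_mul' hx hy)

variable [LinearOrder α] [MulLeftMono α] [MulRightMono α] {a b c : α}

theorem lt_mul_self_of_mul_self_lt_mul_self (hb : IsIdempotentElem (b * b))
    (h : a * a < b * b) : a < b * b :=
  lt_of_not_ge fun hba => h.not_ge (le_mul_of_isIdempotentElem_of_le hb hba hba)

theorem lt_of_mul_le_of_mul_self_lt_mul_self (hb : IsIdempotentElem (b * b))
    (h : a * a < b * b) (hbc : b * c ≤ a) : c < b :=
  lt_of_mul_lt_mul_left' (hbc.trans_lt (lt_mul_self_of_mul_self_lt_mul_self hb h))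

theorem mul_self_eq_of_mul_le_of_mul_self_lt_mul_self (hb : IsIdempotentElem (b * b))
    (hc : IsIdempotentElem (c * c)) (h : a * a < b * b) (hbc : b * c ≤ a) (hac : a ≤ c) :
    c * c = a * a := by
  have hcb : c ≤ b := (lt_of_mul_le_of_mul_self_lt_mul_self hb h hbc).le
  have hca : c * c ≤ a := (mul_le_mul_left hcb c).trans hbc
  exact (le_mul_of_isIdempotentElem_of_le hc hca hca).antisymm (mul_le_mul' hac hac)

end OrderedMul

theorem isIdempotentElem_mul_self {α : Type*} [Semigroup α] {x : α}
    (hx : x * x * x = x * x) : IsIdempotentElem (x * x) := by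
  rw [IsIdempotentElem, ← mul_assoc, hx, hx]

theorem GL2_himp_eq_max_block_general {α : Type*} [CommMonoid α] [LinearOrder α]
    [IsOrderedMonoid α] {a b c : α} (hpot : ∀ x : α, x * x * x = x * x) (hb : b ≤ 1)
    (hgl : ∀ x ≤ b, b * x ≤ x * x) (hsq : a * a < b * b) (hc : IsGreatest {y | b * y ≤ a} c) :
    IsGreatest {x | x * x = a * a} c := by
  have hba : b * a ≤ a := mul_le_of_le_one_left' hb
  refine ⟨mul_self_eq_of_mul_le_of_mul_self_lt_mul_self (isIdempotentElem_mul_self (hpot b))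
    (isIdempotentElem_mul_self (hpot c)) hsq hc.1 (hc.2 hba), fun x hx => hc.2 ?_⟩
  have le_of_sq_lt {y : α} (hy : y * y < b * b) : y ≤ b :=
    ((lt_or_lt_of_mul_lt_mul hy).elim id id).le
  calc b * x ≤ x * x := hgl x (le_of_sq_lt (hx.trans_lt hsq))
    _ = a * a := hx
    _ ≤ b * a := mul_le_mul_left (le_of_sq_lt hsq) a
    _ ≤ a := hba

namespace GL2Chain

variable {α : Type*} [GL2Chain α]

theorem gc_mul_himp (b : α) : GaloisConnection (b * ·) (himp b) := fun y z => mul_le_iff b y z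

theorem isGreatest_himp (b a : α) : IsGreatest {y | b * y ≤ a} (himp b a) :=
  (gc_mul_himp b).isGreatest_u

instance : IsOrderedMonoid α where
  mul_le_mul_left x y hxy z := by
    simpa only [mul_comm z] using (gc_mul_himp z).monotone_l hxy

theorem mul_le_mul_self {x y : α} (hx : x < 1) (hyx : y ≤ x) : x * y ≤ y * y := by
  simpa only [min_eq_right hyx] using (gl2 x y).resolve_left hx.ne

end GL2Chain

/-- in a GL₂-chain, if `a < b < 1` and `a² ≠ b²`, then `b → a` is the
greatest element of `A(a) = {x | x² = a²}`. -/
theorem GL2_himp_eq_max_block {α : Type*} [GL2Chain α] (a b : α)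
    (hab : a < b) (hb : b < 1) (hsq : a * a ≠ b * b) :
    GL2Chain.himp b a * GL2Chain.himp b a = a * a ∧
    ∀ x : α, x * x = a * a → x ≤ GL2Chain.himp b a :=
  GL2_himp_eq_max_block_general GL2Chain.pot2 hb.le (fun _ => GL2Chain.mul_le_mul_self hb)
    ((mul_le_mul' hab.le hab.le).lt_of_ne hsq) (GL2Chain.isGreatest_himp b a)
end
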